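/- arXiv:1911.02823 — 2 statements merged into one kernel-verified Lean document; each statement's English description precedes it below -/
import Mathlib

section
/- Let a, c ∈ ℝ and b ∈ ℝ \ {0}, and define A = (c + √((2a−c)² + 4b²))/2, B = (c − √((2a−c)² + 4b²))/2 and φ = (c − 2a + √((c−2a)² + 4b²))/(2b). Then the quaternion-valued function f(t) = (1/(1+φ²))·(cos(At) + φ²cos(Bt)) + (1/(1+φ²))·(sin(At) + φ²sin(Bt))·i + (φ/(1+φ²))·(sin(At) − sin(Bt))·j + (φ/(1+φ²))·(cos(At) − cos(Bt))·k satisfies f(0) = 1, f'(t) = f(t)·(a·i + b·cos(ct)·j − b·sin(ct)·k) for all t, and ‖f(t)‖ = 1 for all t. -/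
open Quaternion

/-- The imaginary unit `i` of the quaternions. -/
def qi : ℍ[ℝ] := ⟨0, 1, 0, 0⟩

/-- The imaginary unit `j` of the quaternions. -/
def qj : ℍ[ℝ] := ⟨0, 0, 1, 0⟩

/-- The imaginary unit `k` of the quaternions. -/
def qk : ℍ[ℝ] := ⟨0, 0, 0, 1⟩

/-- The explicit quaternion-valued function
`f(t) = (1/(1+φ²))(cos At + φ² cos Bt) + (1/(1+φ²))(sin At + φ² sin Bt) i
      + (φ/(1+φ²))(sin At − sin Bt) j + (φ/(1+φ²))(cos At − cos Bt) k`. -/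
noncomputable def fSol (A B φ : ℝ) (t : ℝ) : ℍ[ℝ] :=
  ((1 / (1 + φ^2)) * (Real.cos (A * t) + φ^2 * Real.cos (B * t))) • (1 : ℍ[ℝ]) +
    ((1 / (1 + φ^2)) * (Real.sin (A * t) + φ^2 * Real.sin (B * t))) • qi +
    ((φ / (1 + φ^2)) * (Real.sin (A * t) - Real.sin (B * t))) • qj +
    ((φ / (1 + φ^2)) * (Real.cos (A * t) - Real.cos (B * t))) • qk

@[simp] theorem qi_re : qi.re = 0 := rfl
@[simp] theorem qi_imI : qi.imI = 1 := rfl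
@[simp] theorem qi_imJ : qi.imJ = 0 := rfl
@[simp] theorem qi_imK : qi.imK = 0 := rfl
@[simp] theorem qj_re : qj.re = 0 := rfl
@[simp] theorem qj_imI : qj.imI = 0 := rfl
@[simp] theorem qj_imJ : qj.imJ = 1 := rfl
@[simp] theorem qj_imK : qj.imK = 0 := rfl
@[simp] theorem qk_re : qk.re = 0 := rfl
@[simp] theorem qk_imI : qk.imI = 0 := rfl
@[simp] theorem qk_imJ : qk.imJ = 0 := rfl
@[simp] theorem qk_imK : qk.imK = 1 := rfl

/-- For `a, c ∈ ℝ`, `b ≠ 0`, with `A = (c + √((2a−c)² + 4b²))/2`,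
`B = (c − √((2a−c)² + 4b²))/2` and `φ = (c − 2a + √((c−2a)² + 4b²))/(2b)`,
the function `f` satisfies `f(0) = 1`, the ODE
`f'(t) = f(t)(a i + b cos(ct) j − b sin(ct) k)`, and `‖f(t)‖ = 1` for all `t`. -/
theorem fSol_solves_ODE (a b c A B φ : ℝ) (hb : b ≠ 0)
    (hA : A = (c + Real.sqrt ((2*a - c)^2 + 4*b^2)) / 2)
    (hB : B = (c - Real.sqrt ((2*a - c)^2 + 4*b^2)) / 2)
    (hφ : φ = (c - 2*a + Real.sqrt ((c - 2*a)^2 + 4*b^2)) / (2*b)) :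
    fSol A B φ 0 = 1 ∧
    (∀ t, HasDerivAt (fSol A B φ)
      (fSol A B φ t * (a • qi + (b * Real.cos (c * t)) • qj - (b * Real.sin (c * t)) • qk)) t) ∧
    (∀ t, ‖fSol A B φ t‖ = 1) := by
  have hs : (c - 2*a)^2 + 4*b^2 = (2*a - c)^2 + 4*b^2 := by ring
  rw [hs] at hφ
  have hsq := Real.sq_sqrt (show 0 ≤ (2*a - c)^2 + 4*b^2 by positivity)
  generalize Real.sqrt ((2*a - c)^2 + 4*b^2) = s at *
  have hc : c = A + B := by rw [hA, hB]; ring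
  have e1 : A = a + φ * b := by rw [hA, hφ]; field_simp; ring
  have e2 : φ * B = φ * a - b := by
    rw [hB, hφ]; field_simp; linear_combination (-1) * hsq
  clear hA hB hφ hsq hs
  have hN : 1 + φ^2 ≠ 0 := by positivity
  refine ⟨?_, ?_, ?_⟩
  · ext <;> simp [fSol]
    field_simp
  · intro t
    have dA : HasDerivAt (fun t : ℝ => A * t) A t := by
      simpa using (hasDerivAt_id t).const_mul A
    have dB : HasDerivAt (fun t : ℝ => B * t) B t := by
      simpa using (hasDerivAt_id t).const_mul B
    have h := ((((dA.cos.add (dB.cos.const_mul (φ^2))).const_mul (1 / (1 + φ^2))).smul_const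
      (1 : ℍ[ℝ])).add
      (((dA.sin.add (dB.sin.const_mul (φ^2))).const_mul (1 / (1 + φ^2))).smul_const qi)).add
      (((dA.sin.sub dB.sin).const_mul (φ / (1 + φ^2))).smul_const qj) |>.add
      (((dA.cos.sub dB.cos).const_mul (φ / (1 + φ^2))).smul_const qk)
    refine HasDerivAt.congr_deriv (f := fSol A B φ) h ?_
    have h1 : Real.cos (A*t) * Real.cos (c*t) + Real.sin (A*t) * Real.sin (c*t)
        = Real.cos (B*t) := by
      rw [← Real.cos_sub, ← Real.cos_neg, hc]; ring_nf
    have h2 : Real.sin (A*t) * Real.cos (c*t) - Real.cos (A*t) * Real.sin (c*t)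
        = -Real.sin (B*t) := by
      rw [← Real.sin_sub, ← Real.sin_neg, hc]; ring_nf
    have h3 : Real.cos (B*t) * Real.cos (c*t) + Real.sin (B*t) * Real.sin (c*t)
        = Real.cos (A*t) := by
      rw [← Real.cos_sub, ← Real.cos_neg, hc]; ring_nf
    have h4 : Real.sin (B*t) * Real.cos (c*t) - Real.cos (B*t) * Real.sin (c*t)
        = -Real.sin (A*t) := by
      rw [← Real.sin_sub, ← Real.sin_neg, hc]; ring_nf
    clear h dA dB hc
    unfold fSol
    rw [show φ / (1 + φ^2) = φ * (1 / (1 + φ^2)) by ring]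
    generalize 1 / (1 + φ^2) = K
    generalize Real.cos (A*t) = x at *
    generalize Real.sin (A*t) = y at *
    generalize Real.cos (B*t) = z at *
    generalize Real.sin (B*t) = w at *
    generalize Real.cos (c*t) = C at *
    generalize Real.sin (c*t) = S at *
    ext <;> simp
    · linear_combination (-K*y) * e1 + (-K*φ*w)*e2 + K*φ*b*h2 - K*φ*b*h4
    · linear_combination (K*x) * e1 + (K*φ*z)*e2 + K*φ*b*h1 - K*φ*b*h3
    · linear_combination (K*φ*x) * e1 - (K*z)*e2 - K*b*h1 - K*φ^2*b*h3
    · linear_combination (-K*φ*y) * e1 + (K*w)*e2 - K*b*h2 - K*φ^2*b*h4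
  · intro t
    have hn : ‖fSol A B φ t‖ * ‖fSol A B φ t‖ = 1 := by
      rw [← Quaternion.normSq_eq_norm_mul_self, Quaternion.normSq_def']
      simp [fSol]
      field_simp
      have p := Real.sin_sq_add_cos_sq (A*t)
      have q := Real.sin_sq_add_cos_sq (t*B)
      linear_combination (1+φ^2)*p + (φ^2+φ^4)*q
    nlinarith [norm_nonneg (fSol A B φ t)]
end

section
/- Let α, β: ℝ → Im ℍ be differentiable with α'(t) = (2/3)·α(t)×β(t) and β'(t) = −(2/3)·α(t)×β(t) for all t. Then: (i) α(t) = −β(t) for all t if and only if α(0) = −β(0); (ii) α(t) = β(t) for all t if and only if α(0) = β(0). Consequently, since for a curve γ with γ'(t) = (x(t)α(t), y(t)β(t)) one has Pγ'(t) = (x(t)β(t), y(t)α(t)), the tangent vector of the geodesic is an eigenvector of P with eigenvalue −1 (respectively +1) along the whole geodesic if and only if it is so at at a single point. -/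
open Quaternion

/-- The cross product `α×β = (αβ − βα)/2` of (imaginary) quaternions. -/
noncomputable def qcross (x y : ℍ[ℝ]) : ℍ[ℝ] := (x * y - y * x) / 2

/-- The almost product structure `P(U,V) = (pq⁻¹V, qp⁻¹U)` at `(p, q)`. -/
noncomputable def Pmap (p q : ℍ[ℝ]) (Z : ℍ[ℝ] × ℍ[ℝ]) : ℍ[ℝ] × ℍ[ℝ] :=
  (p * q⁻¹ * Z.2, q * p⁻¹ * Z.1)

theorem qcross_eq (a b : ℍ[ℝ]) : qcross a b = (1/2 : ℝ) • (a * b - b * a) := by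
  have h : (2 : ℍ[ℝ])⁻¹ = ((1/2 : ℝ) : ℍ[ℝ]) := by
    rw [inv_eq_of_mul_eq_one_right]
    have : (2 : ℍ[ℝ]) = ((2 : ℝ) : ℍ[ℝ]) := by norm_cast
    rw [this, ← Quaternion.coe_mul]
    norm_num
  rw [qcross, div_eq_mul_inv, h, Quaternion.mul_coe_eq_smul]

theorem inner_qcross (a b : ℍ[ℝ]) (c : ℝ) :
    inner ℝ (a - b) (c • qcross a b) = (0 : ℝ) := by
  rw [qcross_eq, Quaternion.inner_def]
  simp
  right
  ring

theorem const_of_hasDerivAt_zero {E : Type*} [NormedAddCommGroup E] [NormedSpace ℝ E]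
    {f : ℝ → E} (h : ∀ t, HasDerivAt f 0 t) (t : ℝ) : f t = f 0 :=
  is_const_of_deriv_eq_zero (fun t => (h t).differentiableAt) (fun t => (h t).deriv) t 0

theorem Pmap_tangent (p q a b : ℍ[ℝ]) (hp : ‖p‖ = 1) (hq : ‖q‖ = 1) :
    Pmap p q (p * a, q * b) = (p * b, q * a) := by
  have hp0 : p ≠ 0 := by rintro rfl; simp at hp
  have hq0 : q ≠ 0 := by rintro rfl; simp at hq
  simp [Pmap, mul_assoc, inv_mul_cancel_left₀ hp0, inv_mul_cancel_left₀ hq0]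

theorem Pmap_neg_iff (p q a b : ℍ[ℝ]) (hp : ‖p‖ = 1) (hq : ‖q‖ = 1) :
    Pmap p q (p * a, q * b) = -(p * a, q * b) ↔ a = -b := by
  have hp0 : p ≠ 0 := by rintro rfl; simp at hp
  rw [Pmap_tangent p q a b hp hq]
  constructor
  · intro h
    have h1 : p * b = p * (-a) := by simpa using congrArg Prod.fst h
    rw [mul_left_cancel₀ hp0 h1, neg_neg]
  · rintro rfl
    simp

theorem Pmap_pos_iff (p q a b : ℍ[ℝ]) (hp : ‖p‖ = 1) (hq : ‖q‖ = 1) :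
    Pmap p q (p * a, q * b) = (p * a, q * b) ↔ a = b := by
  have hp0 : p ≠ 0 := by rintro rfl; simp at hp
  rw [Pmap_tangent p q a b hp hq]
  constructor
  · intro h
    exact (mul_left_cancel₀ hp0 (congrArg Prod.fst h)).symm
  · rintro rfl
    rfl

/-- If `α, β : ℝ → Im ℍ` satisfy `α' = (2/3) α×β` and `β' = −(2/3) α×β`, then
(i) `α ≡ −β` iff `α(0) = −β(0)`; (ii) `α ≡ β` iff `α(0) = β(0)`. Consequently,
for a curve `γ = (x,y)` of unit quaternions with `γ' = (xα, yβ)` (so `Pγ' = (xβ, yα)`),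
the tangent vector is an eigenvector of `P` with eigenvalue `−1` (resp. `+1`) along the
whole geodesic if and only if it is so at a single point. -/
theorem P_eigenvector_iff_at_point (α β : ℝ → ℍ[ℝ])
    (hαim : ∀ t, (α t).re = 0) (hβim : ∀ t, (β t).re = 0)
    (hα : ∀ t, HasDerivAt α ((2/3 : ℝ) • qcross (α t) (β t)) t)
    (hβ : ∀ t, HasDerivAt β (-((2/3 : ℝ) • qcross (α t) (β t))) t)
    (x y : ℝ → ℍ[ℝ]) (hx : ∀ t, ‖x t‖ = 1) (hy : ∀ t, ‖y t‖ = 1) :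
    ((∀ t, α t = -(β t)) ↔ α 0 = -(β 0)) ∧
    ((∀ t, α t = β t) ↔ α 0 = β 0) ∧
    ((∀ t, Pmap (x t) (y t) (x t * α t, y t * β t) = -(x t * α t, y t * β t)) ↔
      Pmap (x 0) (y 0) (x 0 * α 0, y 0 * β 0) = -(x 0 * α 0, y 0 * β 0)) ∧
    ((∀ t, Pmap (x t) (y t) (x t * α t, y t * β t) = (x t * α t, y t * β t)) ↔
      Pmap (x 0) (y 0) (x 0 * α 0, y 0 * β 0) = (x 0 * α 0, y 0 * β 0)) := by
  have h1 : (∀ t, α t = -(β t)) ↔ α 0 = -(β 0) := by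
    refine ⟨fun h => h 0, fun h t => ?_⟩
    have hs : ∀ t, HasDerivAt (fun t => α t + β t) 0 t := fun t => by
      simpa using (hα t).fun_add (hβ t)
    have := const_of_hasDerivAt_zero hs t
    simp only [h, neg_add_cancel] at this
    exact eq_neg_of_add_eq_zero_left this
  have h2 : (∀ t, α t = β t) ↔ α 0 = β 0 := by
    refine ⟨fun h => h 0, fun h t => ?_⟩
    have hs : ∀ t, HasDerivAt (fun t => ‖α t - β t‖ ^ 2) 0 t := fun t => by
      have hd := ((hα t).fun_sub (hβ t)).norm_sq
      rw [sub_neg_eq_add, inner_add_right, inner_qcross] at hd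
      simpa using hd
    have := const_of_hasDerivAt_zero hs t
    simp only [h, sub_self, norm_zero] at this
    have h0 : ‖α t - β t‖ = 0 := by simpa using this
    exact sub_eq_zero.mp (norm_eq_zero.mp h0)
  refine ⟨h1, h2, ?_, ?_⟩
  · simp only [Pmap_neg_iff _ _ _ _ (hx _) (hy _)]
    exact h1
  · simp only [Pmap_pos_iff _ _ _ _ (hx _) (hy _)]
    exact h2
end
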